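/- arXiv:2309.09962 — 2 statements merged into one kernel-verified Lean document; each statement's English description precedes it below -/
import Mathlib

section
/- The group G acts transitively on the set M_{−1,0} = {X ∈ ℝ^{n+2} : Φ(X,X) = −1, Φ(I,X) = 0, X ∉ ℝ·I}: for any X, Y ∈ M_{−1,0} there exists A ∈ G with A X = Y. (Flat-model orbit decomposition: the 'Ti' boundary piece M_{−1,0} is a single orbit of the Poincaré subgroup.) -/
/-- The diagonal symmetric bilinear form on `ℝ^m` whose first `k` diagonal
entries are `-1` and the remaining ones are `+1`. -/
def formSig (k m : ℕ) (x y : Fin m → ℝ) : ℝ :=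
  ∑ i : Fin m, (if (i : ℕ) < k then -(x i * y i) else x i * y i)

/-- `A` belongs to the 'Poincaré subgroup' of `SL(n+2,ℝ)` determined by the signature
`(2,n)` form `Φ = formSig 2 (n+2)` and the null vector `I`: it has determinant one,
preserves `Φ`, and fixes `I`. -/
def IsPoincareMat (n : ℕ) (I : Fin (n + 2) → ℝ)
    (A : Matrix (Fin (n + 2)) (Fin (n + 2)) ℝ) : Prop :=
  A.det = 1 ∧
    (∀ x y : Fin (n + 2) → ℝ,
      formSig 2 (n + 2) (A.mulVec x) (A.mulVec y) = formSig 2 (n + 2) x y) ∧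
    A.mulVec I = I

/-- The set `M_{λ,s} = {X : Φ(X,X) = λ, Φ(I,X) = s, X ∉ ℝ·I}`. -/
def Mset (n : ℕ) (I : Fin (n + 2) → ℝ) (lam s : ℝ) : Set (Fin (n + 2) → ℝ) :=
  {X | formSig 2 (n + 2) X X = lam ∧ formSig 2 (n + 2) I X = s ∧ ¬ ∃ c : ℝ, X = c • I}

/-!
If `x` and `y` have the same nonzero norm, then `x - y` and `x + y` are not both isotropic, and the
reflection in whichever is anisotropic sends `x` to `y` or to `-y`. All vectors involved are
orthogonal to the distinguished vector, so these reflections fix it. From `-y` the reflection in `y`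
leads back to `y` and makes the determinant one. In the other case the determinant is corrected by
a reflection in an anisotropic vector orthogonal to the span `U` of the distinguished vector and
`y`. Such a vector exists: if `Uᗮ` were totally isotropic, then `Uᗮ ≤ Uᗮᗮ = U`, and in dimension at
least four this forces `Uᗮ = U`, although `y ∈ U` is anisotropic.
-/

open Module
open LinearMap (BilinForm IsReflective transvection)

section CommRing

variable {R M : Type*} [CommRing R] [AddCommGroup M] [Module R M]

/-- The subgroup of `GL(M)` formed by the isometries of `B` that have determinant one and fix `v`;
for `B` of signature `(2, n)` and `v` null it is the Poincaré subgroup determined by `(B, v)`.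
If `M` has no finite basis, `LinearEquiv.det` is constantly one. -/
def poincareSubgroup (B : BilinForm R M) (v : M) : Subgroup (M ≃ₗ[R] M) where
  carrier := {g | g.det = 1 ∧ B.IsOrthogonal g ∧ g v = v}
  mul_mem' := by
    rintro g h ⟨hg_det, hg, hgv⟩ ⟨hh_det, hh, hhv⟩
    refine ⟨by rw [map_mul, hg_det, hh_det, one_mul], fun x y ↦ ?_, ?_⟩
    · exact (hg (h x) (h y)).trans (hh x y)
    · exact (congrArg g hhv).trans hgv
  one_mem' := ⟨map_one _, fun _ _ ↦ rfl, rfl⟩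
  inv_mem' := by
    rintro g ⟨hg_det, hg, hgv⟩
    refine ⟨by rw [map_inv, hg_det, inv_one], fun x y ↦ ?_, ?_⟩
    · simpa using (hg (g.symm x) (g.symm y)).symm
    · exact g.symm_apply_eq.mpr hgv.symm

theorem mem_poincareSubgroup {B : BilinForm R M} {v : M} {g : M ≃ₗ[R] M} :
    g ∈ poincareSubgroup B v ↔ g.det = 1 ∧ B.IsOrthogonal g ∧ g v = v :=
  Iff.rfl

theorem det_reflection [Module.Free R M] [Module.Finite R M] {x : M} {f : Dual R M}
    (h : f x = 2) : (Module.reflection h).det = -1 := by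
  have h_transvection : (Module.reflection h : M →ₗ[R] M) = transvection (-f) x := by
    ext y
    simp [Module.reflection_apply, LinearMap.transvection.apply, sub_eq_add_neg]
  rw [← Units.val_inj, LinearEquiv.coe_det, h_transvection, LinearMap.transvection.det,
    LinearMap.neg_apply, h]
  norm_num

/-- The reflection in the hyperplane orthogonal to `v`. Over a field it sends `y` to
`y - (2 * B v y / B v v) • v`; `IsReflective` is what makes this quotient exist over a ring. -/
noncomputable def orthogonalReflection (B : BilinForm R M) {v : M} (hv : IsReflective B v) :
    M ≃ₗ[R] M :=
  Module.reflection (hv.coroot_apply_self B)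

section orthogonalReflection

variable {B : BilinForm R M} {v : M} (hv : IsReflective B v)

theorem orthogonalReflection_self : orthogonalReflection B hv v = -v :=
  Module.reflection_apply_self _

theorem orthogonalReflection_of_apply_eq_zero {y : M} (hvy : B v y = 0) :
    orthogonalReflection B hv y = y := by
  have h_coroot : hv.coroot B y = 0 := hv.regular.left <| by simp [hvy]
  simp [orthogonalReflection, Module.reflection_apply, h_coroot]

theorem orthogonalReflection_sub_apply_left (hB : B.IsSymm) {x y : M} (hxy : B x x = B y y)
    (h : IsReflective B (x - y)) : orthogonalReflection B h x = y := by
  have h_norm : B (x - y) (x - y) = 2 * B (x - y) x := by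
    simp only [map_sub, LinearMap.sub_apply, hB.eq y x, hxy]
    ring
  have h_coroot : h.coroot B x = 1 := h.regular.left <| by
    beta_reduce
    rw [IsReflective.apply_self_mul_coroot_apply, mul_one, h_norm]
  simp [orthogonalReflection, Module.reflection_apply, h_coroot]

theorem orthogonalReflection_mul_mem_poincareSubgroup [Module.Free R M] [Module.Finite R M]
    (hB : B.IsSymm) {w z : M} (hw : IsReflective B w) (hvz : B v z = 0) (hwz : B w z = 0) :
    orthogonalReflection B hv * orthogonalReflection B hw ∈ poincareSubgroup B z := by
  have hB_symm : LinearMap.IsSymm B := LinearMap.BilinForm.isSymm_iff.mp hB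
  refine mem_poincareSubgroup.mpr ⟨?_, fun x y ↦ ?_, ?_⟩
  · simp [orthogonalReflection, det_reflection]
  · exact (hv.isOrthogonal_reflection B hB_symm _ _).trans
      (hw.isOrthogonal_reflection B hB_symm x y)
  · rw [LinearEquiv.mul_apply, orthogonalReflection_of_apply_eq_zero hw hwz,
      orthogonalReflection_of_apply_eq_zero hv hvz]

end orthogonalReflection

end CommRing

section Field

variable {K V : Type*} [Field K] [AddCommGroup V] [Module K V] {B : BilinForm K V}

theorem isReflective_of_apply_self_ne_zero {v : V} (hv : B v v ≠ 0) : IsReflective B v :=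
  ⟨.of_ne_zero hv, fun _ ↦ hv.isUnit.dvd⟩

variable [NeZero (2 : K)]

theorem le_orthogonal_of_forall_apply_self_eq_zero (hB : B.IsSymm) {W : Submodule K V}
    (hW : ∀ w ∈ W, B w w = 0) : W ≤ B.orthogonal W := by
  intro x hx y hy
  rw [hB.polarization, hW _ (W.add_mem hy hx), hW y hy, hW x hx]
  simp

theorem exists_mem_orthogonal_apply_self_ne_zero [FiniteDimensional K V] (hB : B.IsSymm)
    (hB_nondeg : B.Nondegenerate) {U : Submodule K V} (hU : 2 * finrank K U ≤ finrank K V)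
    {u : V} (hu : u ∈ U) (huu : B u u ≠ 0) : ∃ w ∈ B.orthogonal U, B w w ≠ 0 := by
  by_contra! h_isotropic
  have h_le : B.orthogonal U ≤ U :=
    (le_orthogonal_of_forall_apply_self_eq_zero hB h_isotropic).trans_eq
      (LinearMap.BilinForm.orthogonal_orthogonal hB_nondeg hB.isRefl U)
  have h_eq : B.orthogonal U = U :=
    Submodule.eq_of_le_of_finrank_le h_le <| by
      rw [LinearMap.BilinForm.finrank_orthogonal hB_nondeg]
      lia
  exact huu (h_isotropic u (h_eq.symm ▸ hu))

theorem apply_sub_self_ne_zero_or_apply_add_self_ne_zero {x y : V} (hxy : B x x = B y y)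
    (hy : B y y ≠ 0) : B (x - y) (x - y) ≠ 0 ∨ B (x + y) (x + y) ≠ 0 := by
  by_contra! ⟨h_sub, h_add⟩
  have h_parallelogram : B (x - y) (x - y) + B (x + y) (x + y) = 2 * 2 * B y y := by
    simp only [map_sub, map_add, LinearMap.sub_apply, LinearMap.add_apply, hxy]
    ring
  rw [h_sub, h_add, add_zero] at h_parallelogram
  exact mul_ne_zero (mul_ne_zero two_ne_zero two_ne_zero) hy h_parallelogram.symm

theorem poincare_transitive_on_Ti_general (hB : B.IsSymm) (hB_nondeg : B.Nondegenerate)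
    (hV : 4 ≤ finrank K V) {v x y : V} (hvx : B v x = 0) (hvy : B v y = 0)
    (hxy : B x x = B y y) (hy : B y y ≠ 0) :
    ∃ g ∈ poincareSubgroup B v, g x = y := by
  have : FiniteDimensional K V := .of_finrank_pos (by lia)
  have hxv : B x v = 0 := hB.eq v x ▸ hvx
  have hyv : B y v = 0 := hB.eq v y ▸ hvy
  rcases apply_sub_self_ne_zero_or_apply_add_self_ne_zero hxy hy with h_sub | h_add
  · have h_span : finrank K (Submodule.span K {v, y}) ≤ 2 := by
      rw [← Matrix.range_cons_cons_empty v y ![]]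
      exact (finrank_range_le_card ![v, y]).trans_eq (Fintype.card_fin 2)
    obtain ⟨w, hw, hww⟩ := exists_mem_orthogonal_apply_self_ne_zero hB hB_nondeg
      (U := Submodule.span K {v, y}) (by lia) (Submodule.subset_span (by simp)) hy
    have hwv : B w v = 0 := hB.eq v w ▸ hw v (Submodule.subset_span (by simp))
    have hwy : B w y = 0 := hB.eq y w ▸ hw y (Submodule.subset_span (by simp))
    have hr := isReflective_of_apply_self_ne_zero h_sub
    have hs := isReflective_of_apply_self_ne_zero hww
    refine ⟨_, orthogonalReflection_mul_mem_poincareSubgroup hs hB hr hwv (by simp [hxv, hyv]), ?_⟩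
    rw [LinearEquiv.mul_apply, orthogonalReflection_sub_apply_left hB hxy,
      orthogonalReflection_of_apply_eq_zero hs hwy]
  · have hr : IsReflective B (x - -y) := isReflective_of_apply_self_ne_zero (by simpa using h_add)
    have hs := isReflective_of_apply_self_ne_zero hy
    refine ⟨_, orthogonalReflection_mul_mem_poincareSubgroup hs hB hr hyv (by simp [hxv, hyv]), ?_⟩
    rw [LinearEquiv.mul_apply, orthogonalReflection_sub_apply_left hB (by simpa using hxy),
      map_neg, orthogonalReflection_self, neg_neg]

end Field

section formSig

/-- `formSig k m` as a bundled bilinear form, to which Mathlib's theory of nondegenerate forms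
applies. -/
noncomputable def formSigBilin (k m : ℕ) : BilinForm ℝ (Fin m → ℝ) :=
  Matrix.toBilin' (Matrix.diagonal fun i ↦ if (i : ℕ) < k then -1 else 1)

variable (k m : ℕ)

theorem formSigBilin_apply (x y : Fin m → ℝ) : formSigBilin k m x y = formSig k m x y := by
  simp [formSigBilin, formSig, Matrix.toBilin'_apply', dotProduct, Matrix.mulVec_diagonal]

theorem formSigBilin_isSymm : (formSigBilin k m).IsSymm :=
  Matrix.isSymm_toBilin'_iff_isSymm.mpr (Matrix.isSymm_diagonal _)

theorem formSigBilin_nondegenerate : (formSigBilin k m).Nondegenerate := by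
  refine LinearMap.BilinForm.nondegenerate_toBilin'_of_det_ne_zero' _ ?_
  rw [Matrix.det_diagonal, Finset.prod_ne_zero_iff]
  intro i _
  split_ifs <;> norm_num

theorem isPoincareMat_toMatrix' {n : ℕ} {I : Fin (n + 2) → ℝ}
    {g : (Fin (n + 2) → ℝ) ≃ₗ[ℝ] (Fin (n + 2) → ℝ)}
    (hg : g ∈ poincareSubgroup (formSigBilin 2 (n + 2)) I) :
    IsPoincareMat n I (LinearMap.toMatrix' (g : (Fin (n + 2) → ℝ) →ₗ[ℝ] Fin (n + 2) → ℝ)) := by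
  obtain ⟨hg_det, hg, hgI⟩ := mem_poincareSubgroup.mp hg
  refine ⟨?_, fun x y ↦ ?_, by simpa using hgI⟩
  · rw [LinearMap.det_toMatrix', ← LinearEquiv.coe_det, hg_det, Units.val_one]
  · simpa [formSigBilin_apply] using hg x y

end formSig

/-- The Poincaré subgroup acts transitively on the flat-model boundary piece
`Ti = M_{-1,0}`. -/
theorem poincare_transitive_on_Ti
    (n : ℕ) (hn : 2 ≤ n) (I : Fin (n + 2) → ℝ) (hI : I ≠ 0)
    (hII : formSig 2 (n + 2) I I = 0)
    (X Y : Fin (n + 2) → ℝ) (hX : X ∈ Mset n I (-1) 0) (hY : Y ∈ Mset n I (-1) 0) :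
    ∃ A : Matrix (Fin (n + 2)) (Fin (n + 2)) ℝ, IsPoincareMat n I A ∧ A.mulVec X = Y := by
  obtain ⟨hXX, hIX, -⟩ := hX
  obtain ⟨hYY, hIY, -⟩ := hY
  simp only [← formSigBilin_apply] at hXX hIX hYY hIY
  obtain ⟨g, hg, hgX⟩ := poincare_transitive_on_Ti_general (formSigBilin_isSymm 2 (n + 2))
    (formSigBilin_nondegenerate 2 (n + 2)) (by rw [finrank_fin_fun]; lia) hIX hIY
    (hXX.trans hYY.symm) (by simp [hYY])
  exact ⟨_, isPoincareMat_toMatrix' hg, by simpa using hgX⟩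
end

section
/- For any λ ∈ ℝ and any X ∈ M_{λ,1}, the stabilizer {A ∈ G : A X = X} of X in G is isomorphic as a group to {B ∈ GL(n,ℝ) : η(Bu,Bv) = η(u,v) for all u,v ∈ ℝ^n, det B = 1}, i.e. to SO(1,n−1). (This realizes each Minkowski slice of the flat model as the homogeneous space ISO(1,n−1)/SO(1,n−1).) -/
/-- The group of linear automorphisms of `ℝ^m` with determinant `1` preserving the
bilinear form `formSig k m` (of signature `(k, m-k)`), realized as a subgroup of the
group of invertible `m × m` real matrices. -/
def specialIsometry (k m : ℕ) : Subgroup (Matrix (Fin m) (Fin m) ℝ)ˣ where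
  carrier := {A | ((A : Matrix (Fin m) (Fin m) ℝ)).det = 1 ∧
    ∀ x y : Fin m → ℝ,
      formSig k m ((A : Matrix (Fin m) (Fin m) ℝ).mulVec x)
        ((A : Matrix (Fin m) (Fin m) ℝ).mulVec y) = formSig k m x y}
  one_mem' := by
    refine ⟨by simp, fun x y => by simp⟩
  mul_mem' := by
    intro a b ha hb
    obtain ⟨had, haf⟩ := ha
    obtain ⟨hbd, hbf⟩ := hb
    refine ⟨by rw [Units.val_mul, Matrix.det_mul, had, hbd, mul_one], fun x y => ?_⟩
    rw [Units.val_mul, ← Matrix.mulVec_mulVec, ← Matrix.mulVec_mulVec, haf, hbf]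
  inv_mem' := by
    intro a ha
    obtain ⟨had, haf⟩ := ha
    have hinv : (↑a⁻¹ : Matrix (Fin m) (Fin m) ℝ) * (↑a : Matrix (Fin m) (Fin m) ℝ) = 1 := a.inv_mul
    refine ⟨?_, fun x y => ?_⟩
    · have h := congrArg Matrix.det hinv
      rw [Matrix.det_mul, had, mul_one, Matrix.det_one] at h
      exact h
    · have hx : ∀ v : Fin m → ℝ,
          (↑a : Matrix (Fin m) (Fin m) ℝ).mulVec
            ((↑a⁻¹ : Matrix (Fin m) (Fin m) ℝ).mulVec v) = v := by
        intro v
        rw [Matrix.mulVec_mulVec, a.mul_inv, Matrix.one_mulVec]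
      calc formSig k m ((↑a⁻¹ : Matrix (Fin m) (Fin m) ℝ).mulVec x)
              ((↑a⁻¹ : Matrix (Fin m) (Fin m) ℝ).mulVec y)
          = formSig k m
              ((↑a : Matrix (Fin m) (Fin m) ℝ).mulVec
                ((↑a⁻¹ : Matrix (Fin m) (Fin m) ℝ).mulVec x))
              ((↑a : Matrix (Fin m) (Fin m) ℝ).mulVec
                ((↑a⁻¹ : Matrix (Fin m) (Fin m) ℝ).mulVec y)) := (haf _ _).symm
        _ = formSig k m x y := by rw [hx, hx]

/-- The subgroup of invertible `m × m` real matrices fixing a given vector `v`. -/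
def vecStab (m : ℕ) (v : Fin m → ℝ) : Subgroup (Matrix (Fin m) (Fin m) ℝ)ˣ where
  carrier := {A | (A : Matrix (Fin m) (Fin m) ℝ).mulVec v = v}
  one_mem' := by simp
  mul_mem' := by
    intro a b ha hb
    show ((a * b : (Matrix (Fin m) (Fin m) ℝ)ˣ) : Matrix (Fin m) (Fin m) ℝ).mulVec v = v
    rw [Units.val_mul, ← Matrix.mulVec_mulVec, hb, ha]
  inv_mem' := by
    intro a ha
    show ((a⁻¹ : (Matrix (Fin m) (Fin m) ℝ)ˣ) : Matrix (Fin m) (Fin m) ℝ).mulVec v = v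
    conv_lhs => rw [← ha]
    rw [Matrix.mulVec_mulVec, a.inv_mul, Matrix.one_mulVec]

/-- The 'Poincaré subgroup' of `SL(n+2,ℝ)` determined by the signature `(2,n)` form
`formSig 2 (n+2)` and the null vector `I`. -/
def poincareGroup (n : ℕ) (I : Fin (n + 2) → ℝ) :
    Subgroup (Matrix (Fin (n + 2)) (Fin (n + 2)) ℝ)ˣ :=
  specialIsometry 2 (n + 2) ⊓ vecStab (n + 2) I

/-!
If `q` denotes the norm of `X`, the vectors `X - ((q + 1) / 2) • I` and `X - ((q - 1) / 2) • I` are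
orthogonal of norms `-1` and `1`, and they are fixed by exactly the maps fixing `I` and `X`. Since
products of reflections act transitively on orthogonal families with prescribed nonzero norms, this
pair can be completed to a basis whose Gram matrix is a permutation of the standard one. In this
basis an isometry fixing both vectors also preserves their orthogonal complement, so it is block
diagonal, with an isometry of the form on that complement in one block and `1` in the other.
-/

section Reflections

open LinearMap

variable {R V : Type*} [CommRing R] [AddCommGroup V] [Module R V] {B : LinearMap.BilinForm R V}

theorem exists_isometryEquiv_map_eq_of_isReflective_sub (hB : B.IsSymm) {u v : V}
    (huv : B u u = B v v) (hr : IsReflective B (u - v)) :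
    ∃ σ : B.IsometryEquiv B, σ u = v ∧ ∀ w, B (u - v) w = 0 → σ w = w := by
  let ρ := Module.reflection (IsReflective.coroot_apply_self B hr)
  have coroot_u : IsReflective.coroot B hr u = 1 := hr.regular.left <| by
    change B (u - v) (u - v) * _ = _ * _
    have hvu : B v u = B u v := hB.eq v u
    rw [IsReflective.apply_self_mul_coroot_apply]
    simp only [map_sub, LinearMap.sub_apply]
    linear_combination huv - hvu
  refine ⟨⟨ρ, IsReflective.isOrthogonal_reflection B hr ⟨hB.eq⟩⟩, ?_, fun w hw => ?_⟩
  · change ρ u = v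
    rw [Module.reflection_apply, coroot_u, one_smul, sub_sub_cancel]
  · have coroot_w : IsReflective.coroot B hr w = 0 := hr.regular.left <| by
      change B (u - v) (u - v) * _ = _ * _
      rw [IsReflective.apply_self_mul_coroot_apply, hw, mul_zero, mul_zero]
    change ρ w = w
    rw [Module.reflection_apply, coroot_w, zero_smul, sub_zero]

end Reflections

section Witt

open LinearMap

variable {K V : Type*} [Field K] [AddCommGroup V] [Module K V] {B : LinearMap.BilinForm K V}

theorem isReflective_of_apply_self_ne_zero_s5 {x : V} (hx : B x x ≠ 0) : IsReflective B x :=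
  ⟨.of_ne_zero hx, fun _ => (isUnit_iff_ne_zero.mpr hx).dvd⟩

variable [NeZero (2 : K)]

theorem exists_isometryEquiv_map_eq (hB : B.IsSymm) {u v : V} (huv : B u u = B v v)
    (hu : B u u ≠ 0) :
    ∃ σ : B.IsometryEquiv B, σ u = v ∧ ∀ w, B u w = 0 → B v w = 0 → σ w = w := by
  by_cases hsub : B (u - v) (u - v) = 0
  -- Then `u + v` and `v` are both anisotropic: reflect `u` to `-v`, and then `-v` to `v`.
  · have four_ne_zero : (2 * 2 : K) ≠ 0 := mul_ne_zero two_ne_zero two_ne_zero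
    have hadd : B (u - -v) (u - -v) ≠ 0 := by
      have : B (u - -v) (u - -v) = 2 * 2 * B u u := by
        simp only [map_sub, map_neg, LinearMap.sub_apply, LinearMap.neg_apply] at hsub ⊢
        linear_combination -2 * huv - hsub
      exact this ▸ mul_ne_zero four_ne_zero hu
    have hneg : B (-v - v) (-v - v) ≠ 0 := by
      have : B (-v - v) (-v - v) = 2 * 2 * B v v := by
        simp only [map_sub, map_neg, LinearMap.sub_apply, LinearMap.neg_apply]
        ring
      exact this ▸ mul_ne_zero four_ne_zero (huv ▸ hu)
    obtain ⟨σ, hσu, hσ⟩ := exists_isometryEquiv_map_eq_of_isReflective_sub hB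
      (by simpa using huv) (isReflective_of_apply_self_ne_zero_s5 hadd)
    obtain ⟨τ, hτv, hτ⟩ := exists_isometryEquiv_map_eq_of_isReflective_sub hB
      (by simp) (isReflective_of_apply_self_ne_zero_s5 hneg)
    refine ⟨σ.trans τ, (congrArg τ hσu).trans hτv, fun w huw hvw => ?_⟩
    calc τ (σ w) = τ w := congrArg τ (hσ w (by simp [huw, hvw]))
      _ = w := hτ w (by simp [hvw])
  · obtain ⟨σ, hσu, hσ⟩ := exists_isometryEquiv_map_eq_of_isReflective_sub hB huv
      (isReflective_of_apply_self_ne_zero_s5 hsub)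
    exact ⟨σ, hσu, fun w huw hvw => hσ w (by simp [huw, hvw])⟩

theorem exists_isometryEquiv_forall_map_eq {ι : Type*} [Finite ι] (hB : B.IsSymm) {f g : ι → V}
    (hf : B.IsOrthoᵢ f) (hg : B.IsOrthoᵢ g) (hfg : ∀ i, B (f i) (f i) = B (g i) (g i))
    (hf₀ : ∀ i, B (f i) (f i) ≠ 0) :
    ∃ σ : B.IsometryEquiv B, ∀ i, σ (f i) = g i := by
  classical
  cases nonempty_fintype ι
  suffices ∀ s : Finset ι, ∃ σ : B.IsometryEquiv B, ∀ i ∈ s, σ (f i) = g i by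
    simpa using this Finset.univ
  intro s
  induction s using Finset.induction_on with
  | empty => exact ⟨.refl B, by simp⟩
  | insert a s ha ih =>
    obtain ⟨σ, hσ⟩ := ih
    obtain ⟨τ, hτa, hτ⟩ := exists_isometryEquiv_map_eq hB (u := σ (f a)) (v := g a)
      ((σ.map_app _ _).trans (hfg a)) ((σ.map_app _ _).trans_ne (hf₀ a))
    refine ⟨σ.trans τ, Finset.forall_mem_insert _ _ _ |>.mpr ⟨hτa, fun i hi => ?_⟩⟩
    have hai : a ≠ i := fun h => ha (h ▸ hi)
    have hσai : B (σ (f a)) (g i) = 0 := by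
      rw [← hσ i hi, σ.map_app]
      exact hf hai
    calc τ (σ (f i)) = τ (g i) := congrArg τ (hσ i hi)
      _ = g i := hτ (g i) hσai (hg hai)

end Witt

section BlockForms

open Matrix LinearMap

variable {R V ι κ μ : Type*} [CommRing R] [AddCommGroup V] [Module R V]
  [Fintype ι] [Fintype κ] [DecidableEq κ] [Fintype μ] [DecidableEq μ]

theorem fromBlocks_congruence_eq_self_iff {M B : Matrix ι ι R} {N : Matrix κ κ R} (hN : IsUnit N)
    {C : Matrix κ ι R} :
    (fromBlocks B 0 C 1)ᵀ * fromBlocks M 0 0 N * fromBlocks B 0 C 1 = fromBlocks M 0 0 N ↔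
      Bᵀ * M * B = M ∧ C = 0 := by
  have hNC : N * C = 0 ↔ C = 0 := by
    refine ⟨fun h => ?_, fun h => by simp [h]⟩
    simpa [nonsing_inv_mul_cancel_left _ _ ((isUnit_iff_isUnit_det N).mp hN)] using
      congrArg (N⁻¹ * ·) h
  simp only [fromBlocks_transpose, fromBlocks_multiply, fromBlocks_inj, transpose_zero,
    transpose_one, Matrix.mul_zero, Matrix.zero_mul, Matrix.mul_one, Matrix.one_mul, add_zero,
    zero_add, and_true, hNC]
  constructor
  · rintro ⟨hB, -, hC⟩
    exact ⟨by simpa [hC] using hB, hC⟩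
  · rintro ⟨hB, rfl⟩
    simpa using hB

variable [DecidableEq ι]

theorem isOrthogonal_iff_toMatrix_congruence (b : Module.Basis ι R V) {Φ : LinearMap.BilinForm R V}
    {T : V →ₗ[R] V} :
    Φ.IsOrthogonal T ↔ (toMatrix b b T)ᵀ * LinearMap.BilinForm.toMatrix b Φ * toMatrix b b T =
      LinearMap.BilinForm.toMatrix b Φ := by
  rw [← LinearMap.BilinForm.toMatrix_comp,
    (LinearMap.BilinForm.toMatrix b).injective.eq_iff, LinearMap.ext_iff₂]
  rfl

theorem toBilin'_isOrthogonal_iff {J A : Matrix ι ι R} :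
    (toBilin' J).IsOrthogonal (toLin' A) ↔ Aᵀ * J * A = J := by
  rw [isOrthogonal_iff_toMatrix_congruence (Pi.basisFun R ι),
    LinearMap.BilinForm.toMatrix_basisFun]
  simp [toMatrix_eq_toMatrix']

theorem forall_map_basis_inr_eq_iff (b : Module.Basis (ι ⊕ κ) R V) {T : V →ₗ[R] V} :
    (∀ j, T (b (Sum.inr j)) = b (Sum.inr j)) ↔
      ∃ B C, toMatrix b b T = fromBlocks B 0 C 1 := by
  constructor
  · intro hT
    refine ⟨(toMatrix b b T).toBlocks₁₁, (toMatrix b b T).toBlocks₂₁, ?_⟩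
    ext i (j | j)
    · cases i <;> rfl
    · cases i <;> simp [toMatrix_apply, hT, one_apply, Finsupp.single_apply, eq_comm]
  · rintro ⟨B, C, hBC⟩ j
    refine b.ext_elem fun i => ?_
    rw [← toMatrix_apply, hBC]
    cases i <;> simp [one_apply, Finsupp.single_apply, eq_comm]

theorem isOrthogonal_and_forall_map_basis_inr_eq_iff (b : Module.Basis (ι ⊕ κ) R V)
    {Φ : LinearMap.BilinForm R V} {M : Matrix ι ι R} {N : Matrix κ κ R}
    (hΦ : LinearMap.BilinForm.toMatrix b Φ = fromBlocks M 0 0 N) (hN : IsUnit N)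
    {T : V →ₗ[R] V} :
    (Φ.IsOrthogonal T ∧ ∀ j, T (b (Sum.inr j)) = b (Sum.inr j)) ↔
      ∃ B, Bᵀ * M * B = M ∧ toMatrix b b T = fromBlocks B 0 0 1 := by
  rw [isOrthogonal_iff_toMatrix_congruence b, hΦ, forall_map_basis_inr_eq_iff]
  constructor
  · rintro ⟨hT, B, C, hBC⟩
    obtain ⟨hB, rfl⟩ := (fromBlocks_congruence_eq_self_iff hN).mp (hBC ▸ hT)
    exact ⟨B, hB, hBC⟩
  · rintro ⟨B, hB, hT⟩
    exact ⟨hT ▸ (fromBlocks_congruence_eq_self_iff hN).mpr ⟨hB, rfl⟩, B, 0, hT⟩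

/-- The matrix, in the standard basis of `μ → R`, of the endomorphism acting by `B` on the span of
the vectors `b (Sum.inl i)` and fixing the vectors `b (Sum.inr j)`. -/
noncomputable def blockExtension (b : Module.Basis (ι ⊕ κ) R (μ → R)) :
    Matrix ι ι R →* Matrix μ μ R where
  toFun B := toMatrixAlgEquiv' (toLinAlgEquiv b (fromBlocks B 0 0 1))
  map_one' := by simp only [fromBlocks_one, map_one]
  map_mul' B C := by simp [← map_mul, fromBlocks_multiply]

theorem blockExtension_eq_iff (b : Module.Basis (ι ⊕ κ) R (μ → R)) {B : Matrix ι ι R}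
    {A : Matrix μ μ R} :
    blockExtension b B = A ↔ toMatrix b b (toLin' A) = fromBlocks B 0 0 1 := by
  change toMatrixAlgEquiv' (toLinAlgEquiv b (fromBlocks B 0 0 1)) = A ↔
    toMatrixAlgEquiv b (toLinAlgEquiv' A) = _
  rw [← AlgEquiv.eq_symm_apply, ← AlgEquiv.eq_symm_apply, eq_comm]
  rfl

theorem blockExtension_injective (b : Module.Basis (ι ⊕ κ) R (μ → R)) :
    Function.Injective (blockExtension b) := fun _ _ h =>
  (fromBlocks_inj.mp <|
    ((blockExtension_eq_iff b).mp h).symm.trans ((blockExtension_eq_iff b).mp rfl)).1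

theorem det_blockExtension (b : Module.Basis (ι ⊕ κ) R (μ → R)) (B : Matrix ι ι R) :
    (blockExtension b B).det = B.det := by
  rw [← LinearMap.det_toLin', ← LinearMap.det_toMatrix b, (blockExtension_eq_iff b).mp rfl]
  simp

end BlockForms

section Signature

open Matrix LinearMap

/-- The Gram matrix of `formSig k m` in the standard basis, linking the explicit sum to the matrix
calculus of bilinear forms. -/
abbrev signatureMatrix (k m : ℕ) : Matrix (Fin m) (Fin m) ℝ :=
  diagonal fun i => if (i : ℕ) < k then -1 else 1

theorem formSig_eq_toBilin' (k m : ℕ) (x y : Fin m → ℝ) :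
    formSig k m x y = toBilin' (signatureMatrix k m) x y := by
  rw [toBilin'_apply']
  simp [formSig, dotProduct, mulVec_diagonal]

theorem mem_specialIsometry_iff {k m : ℕ} {A : (Matrix (Fin m) (Fin m) ℝ)ˣ} :
    A ∈ specialIsometry k m ↔
      A.val.det = 1 ∧ (toBilin' (signatureMatrix k m)).IsOrthogonal (toLin' A.val) := by
  change (_ ∧ ∀ x y, _) ↔ _
  simp only [formSig_eq_toBilin']
  rfl

theorem map_blockExtension_specialIsometry {k n k' m : ℕ} {κ : Type*} [Fintype κ] [DecidableEq κ]
    (b : Module.Basis (Fin n ⊕ κ) ℝ (Fin m → ℝ)) {N : Matrix κ κ ℝ} (hN : IsUnit N)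
    (hb : LinearMap.BilinForm.toMatrix b (toBilin' (signatureMatrix k' m)) =
      fromBlocks (signatureMatrix k n) 0 0 N) :
    (specialIsometry k n).map (Units.map (blockExtension b)) =
      specialIsometry k' m ⊓ ⨅ j, vecStab m (b (Sum.inr j)) := by
  ext A
  have hA : A ∈ specialIsometry k' m ⊓ ⨅ j, vecStab m (b (Sum.inr j)) ↔
      A.val.det = 1 ∧ ∃ B, Bᵀ * signatureMatrix k n * B = signatureMatrix k n ∧
        blockExtension b B = A.val := by
    simp only [blockExtension_eq_iff,
      ← isOrthogonal_and_forall_map_basis_inr_eq_iff b hb hN, ← and_assoc]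
    rw [← mem_specialIsometry_iff, Subgroup.mem_inf, Subgroup.mem_iInf]
    rfl
  rw [hA, Subgroup.mem_map]
  constructor
  · rintro ⟨B, hB, rfl⟩
    obtain ⟨hdet, hort⟩ := mem_specialIsometry_iff.mp hB
    exact ⟨(det_blockExtension b B.val).trans hdet, B, toBilin'_isOrthogonal_iff.mp hort, rfl⟩
  · rintro ⟨hdet, B, hB, hBA⟩
    have hdetB : B.det = 1 := by rw [← det_blockExtension b, hBA, hdet]
    let U := B.nonsingInvUnit (by simp [hdetB])
    exact ⟨U, mem_specialIsometry_iff.mpr ⟨hdetB, toBilin'_isOrthogonal_iff.mpr hB⟩,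
      Units.ext hBA⟩

end Signature

section AdaptedBasis

open Matrix LinearMap

variable {K V ι κ : Type*} [Field K] [NeZero (2 : K)] [AddCommGroup V] [Module K V]
  [Fintype ι] [DecidableEq ι] [Fintype κ] [DecidableEq κ]

theorem exists_basis_inr_eq_and_toMatrix_eq {Φ : LinearMap.BilinForm K V} (hΦ : Φ.IsSymm)
    (b : Module.Basis (ι ⊕ κ) K V) {M : Matrix ι ι K} {d : κ → K} (hd : ∀ j, d j ≠ 0)
    (hb : LinearMap.BilinForm.toMatrix b Φ = fromBlocks M 0 0 (diagonal d)) {g : κ → V}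
    (hg : ∀ i j, Φ (g i) (g j) = diagonal d i j) :
    ∃ b' : Module.Basis (ι ⊕ κ) K V, (∀ j, b' (Sum.inr j) = g j) ∧
      LinearMap.BilinForm.toMatrix b' Φ = fromBlocks M 0 0 (diagonal d) := by
  have hb_inr (i j : κ) : Φ (b (Sum.inr i)) (b (Sum.inr j)) = diagonal d i j := by
    rw [← LinearMap.BilinForm.toMatrix_apply, hb, fromBlocks_apply₂₂]
  obtain ⟨σ, hσ⟩ := exists_isometryEquiv_forall_map_eq hΦ (f := fun j => b (Sum.inr j)) (g := g)
    (fun i j hij => (hb_inr i j).trans (diagonal_apply_ne d hij))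
    (fun i j hij => (hg i j).trans (diagonal_apply_ne d hij))
    (fun i => (hb_inr i i).trans (hg i i).symm)
    (fun i => by simpa only [hb_inr, diagonal_apply_eq] using hd i)
  refine ⟨b.map σ.toLinearEquiv, fun j => (b.map_apply _ _).trans (hσ j), ?_⟩
  rw [← hb]
  ext i j
  simp only [LinearMap.BilinForm.toMatrix_apply, Module.Basis.map_apply]
  exact σ.map_app _ _

theorem toBilin'_signatureMatrix_isSymm (k m : ℕ) :
    (toBilin' (signatureMatrix k m)).IsSymm := by
  refine ⟨fun x y => ?_⟩
  simp only [← formSig_eq_toBilin', formSig, mul_comm]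

/-- The indexing of coordinates that singles out the first and the last one as `Sum.inr 0` and
`Sum.inr 1`: one of the negative and one of the positive directions of an indefinite `formSig`. -/
noncomputable def finSumTwoEquiv (n : ℕ) : Fin n ⊕ Fin 2 ≃ Fin (n + 2) :=
  Equiv.ofBijective (Sum.elim (fun i => i.castSucc.succ) ![0, Fin.last (n + 1)]) <| by
    refine (Fintype.bijective_iff_injective_and_card _).mpr ⟨?_, by simp⟩
    refine Function.Injective.sumElim ?_ ?_ ?_
    · exact (Fin.succ_injective _).comp (Fin.castSucc_injective _)
    · intro a b
      fin_cases a <;> fin_cases b <;> simp [Fin.ext_iff]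
    · intro a b
      fin_cases b <;> simp [Fin.ext_iff, a.isLt.ne]

theorem signatureMatrix_submatrix_finSumTwoEquiv {k n : ℕ} (hk : k ≤ n) :
    (signatureMatrix (k + 1) (n + 2)).submatrix (finSumTwoEquiv n) (finSumTwoEquiv n) =
      fromBlocks (signatureMatrix k n) 0 0 (diagonal ![-1, 1]) := by
  rw [submatrix_diagonal_equiv, fromBlocks_diagonal]
  congr 1
  ext (i | j)
  · simp [finSumTwoEquiv]
  · fin_cases j <;> simp [finSumTwoEquiv, hk]

theorem exists_basis_toMatrix_signatureMatrix_eq {k n : ℕ} (hk : k ≤ n)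
    {g : Fin 2 → Fin (n + 2) → ℝ}
    (hg : ∀ i j, formSig (k + 1) (n + 2) (g i) (g j) = diagonal ![-1, 1] i j) :
    ∃ b : Module.Basis (Fin n ⊕ Fin 2) ℝ (Fin (n + 2) → ℝ), (∀ j, b (Sum.inr j) = g j) ∧
      LinearMap.BilinForm.toMatrix b (toBilin' (signatureMatrix (k + 1) (n + 2))) =
        fromBlocks (signatureMatrix k n) 0 0 (diagonal ![-1, 1]) := by
  refine exists_basis_inr_eq_and_toMatrix_eq (toBilin'_signatureMatrix_isSymm _ _)
    ((Pi.basisFun ℝ (Fin (n + 2))).reindex (finSumTwoEquiv n).symm) (by simp [Fin.forall_fin_two])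
    ?_ (by simpa only [formSig_eq_toBilin'] using hg)
  rw [← signatureMatrix_submatrix_finSumTwoEquiv hk]
  ext i j
  simp [LinearMap.BilinForm.toMatrix_apply, toBilin'_single]

end AdaptedBasis

section Stabilizer

theorem iInf_vecStab_sub_smul {m : ℕ} {ι : Type*} (I X : Fin m → ℝ) {c : ι → ℝ} {i j : ι}
    (hij : c i ≠ c j) :
    ⨅ l, vecStab m (X - c l • I) = vecStab m I ⊓ vecStab m X := by
  ext A
  rw [Subgroup.mem_iInf]
  change (∀ l, A.val.mulVec (X - c l • I) = X - c l • I) ↔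
    A.val.mulVec I = I ∧ A.val.mulVec X = X
  simp only [Matrix.mulVec_sub, Matrix.mulVec_smul]
  constructor
  · intro hA
    have hI : A.val.mulVec I = I := by
      apply smul_right_injective _ (sub_ne_zero.mpr hij)
      linear_combination (norm := module) hA j - hA i
    exact ⟨hI, by simpa only [hI, sub_left_inj] using hA i⟩
  · rintro ⟨hI, hX⟩ l
    rw [hI, hX]

theorem formSig_sub_smul {k m : ℕ} {I X : Fin m → ℝ} (hII : formSig k m I I = 0)
    (hIX : formSig k m I X = 1) (a b : ℝ) :
    formSig k m (X - a • I) (X - b • I) = formSig k m X X - a - b := by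
  have hXI : formSig k m X I = 1 := by
    simpa only [formSig, mul_comm] using hIX
  simp only [formSig_eq_toBilin'] at *
  simp only [map_sub, map_smul, LinearMap.sub_apply, LinearMap.smul_apply, smul_eq_mul,
    hII, hIX, hXI]
  ring

theorem stabilizer_of_minkowski_point_iso_SO_general {k n : ℕ} (hk : k ≤ n)
    {I X : Fin (n + 2) → ℝ} (hII : formSig (k + 1) (n + 2) I I = 0)
    (hIX : formSig (k + 1) (n + 2) I X = 1) :
    Nonempty (↥(specialIsometry (k + 1) (n + 2) ⊓ vecStab (n + 2) I ⊓ vecStab (n + 2) X) ≃*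
      ↥(specialIsometry k n)) := by
  let c : Fin 2 → ℝ := ![(formSig (k + 1) (n + 2) X X + 1) / 2,
    (formSig (k + 1) (n + 2) X X - 1) / 2]
  have hc : c 0 ≠ c 1 := by
    simp only [c, Matrix.cons_val_zero, Matrix.cons_val_one]
    linarith
  obtain ⟨b, hbg, hb⟩ := exists_basis_toMatrix_signatureMatrix_eq hk
    (g := fun j => X - c j • I) fun i j => by
      rw [formSig_sub_smul hII hIX]
      fin_cases i <;> fin_cases j <;> simp [c] <;> ring
  have hN : IsUnit (Matrix.diagonal ![(-1 : ℝ), 1]) := by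
    simp [Matrix.isUnit_iff_isUnit_det]
  have hmap : (specialIsometry k n).map (Units.map (blockExtension b)) =
      specialIsometry (k + 1) (n + 2) ⊓ vecStab (n + 2) I ⊓ vecStab (n + 2) X := by
    rw [map_blockExtension_specialIsometry b hN hb, inf_assoc,
      ← iInf_vecStab_sub_smul I X hc]
    simp only [hbg]
  have hinj : Function.Injective (Units.map (blockExtension b)) :=
    Units.map_injective (blockExtension_injective b)
  exact ⟨(((specialIsometry k n).equivMapOfInjective _ hinj).trans
    (MulEquiv.subgroupCongr hmap)).symm⟩

end Stabilizer

/-- For any `λ ∈ ℝ` and any `X ∈ M_{λ,1}`, the stabilizer of `X` in the Poincaré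
subgroup `G` is isomorphic, as a group, to the special Lorentz group
`SO(1,n-1) = {B : η(Bu,Bv) = η(u,v), det B = 1}` (where `η = formSig 1 n` is the
standard Minkowski form of signature `(1,n-1)` on `ℝ^n`). -/
theorem stabilizer_of_minkowski_point_iso_SO
    (n : ℕ) (hn : 2 ≤ n) (I : Fin (n + 2) → ℝ) (hI : I ≠ 0)
    (hII : formSig 2 (n + 2) I I = 0) (lam : ℝ)
    (X : Fin (n + 2) → ℝ) (hX : X ∈ Mset n I lam 1) :
    Nonempty ((↥(poincareGroup n I ⊓ vecStab (n + 2) X)) ≃* ↥(specialIsometry 1 n)) :=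
  stabilizer_of_minkowski_point_iso_SO_general (one_le_two.trans hn) hII hX.2.1
end
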